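/- Let H₁ and H₂ be complex Hilbert spaces with dim H₁ ≥ 2 and dim H₂ ≥ 2, and let B(H₁,H₂) denote the space of bounded linear operators from H₁ to H₂, with the orthogonality relation x ⊥ y defined by x*y = 0 (x* the Hilbert-space adjoint). Let G be a uniquely 2-divisible abelian group and let f : B(H₁,H₂) → G satisfy: x*y = 0 implies f(x + y) = f(x) + f(y). Then there exist a unique additive mapping T : B(H₁,H₂) → G and a symmetric biadditive mapping B : B(H₁,H₂) × B(H₁,H₂) → G with the property that x*y = 0 implies B(x, y) = 0, such that f(x) = T(x) + B(x, x) for all x ∈ B(H₁,H₂). -/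

import Mathlib

/-!
Choose a Hilbert basis of `H₂` and partition its index set into finitely many pieces, each of which
a permutation maps into its complement. The projections `P` onto the spans of the pieces are
mutually orthogonal and sum to `1`, so `f x` is the sum of the `f (P x)`, and each `P` has an
orthogonal copy: an operator `Q` with `P* Q = 0` and `Q* Q = P* P`. Then `P + Q ⊥ Q - P`, and
decomposing `(P + Q) x + (Q - P) y = P (x - y) + Q (x + y)` in two ways yields
`f (P (x - y)) + f (Q (x + y)) = f (P x) + f (Q x) + f (-P y) + f (Q y)`.
This equation makes the odd part of `x ↦ f (P x)` additive and forces the parallelogram law on its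
even part, which is therefore quadratic.
-/

section UniquelyDivisible

variable {G W : Type*} [AddCommGroup G] [AddCommGroup W]

theorem isUnit_two_moduleEnd (h : ∀ g : G, ∃! a : G, a + a = g) :
    IsUnit (2 : Module.End ℤ G) := by
  refine (Module.End.isUnit_iff _).2 ((Function.bijective_iff_existsUnique _).2 fun g => ?_)
  simpa only [Module.End.ofNat_apply, two_nsmul] using h g

theorem isSMulRegular_two_of_invertible [Invertible (2 : Module.End ℤ G)] : IsSMulRegular G 2 :=
  ((Module.End.isUnit_iff _).1 (isUnit_of_invertible (2 : Module.End ℤ G))).1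

theorem eq_of_additive_add_even_eq (h₂ : IsSMulRegular G 2) {T T' : W →+ G} {q q' : W → G}
    (hq : q.Even) (hq' : q'.Even) (h : ∀ x, T x + q x = T' x + q' x) : T = T' := by
  ext x
  apply h₂
  have hneg := h (-x)
  rw [map_neg, map_neg, hq, hq'] at hneg
  linear_combination (norm := module) h x - hneg

theorem neg_neg_of_biadditive {B : W → W → G} (hl : ∀ x y z, B (x + y) z = B x z + B y z)
    (hr : ∀ x y z, B x (y + z) = B x y + B x z) (x y : W) : B (-x) (-y) = B x y :=
  calc B (-x) (-y) = -B x (-y) := map_neg (AddMonoidHom.mk' (B · (-y)) fun u v => hl u v (-y)) x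
    _ = B x y := neg_eq_iff_eq_neg.2 (map_neg (AddMonoidHom.mk' (B x) (hr x)) y)

/-- The parallelogram law for maps between abelian groups. It characterizes quadratic maps over `ℤ`
when the codomain has no `2`-torsion. -/
def ParallelogramLaw (q : W → G) : Prop :=
  ∀ x y, q (x + y) + q (x - y) = 2 • q x + 2 • q y

namespace ParallelogramLaw

variable {q : W → G} (hq : ParallelogramLaw q) (h₂ : IsSMulRegular G 2)
include hq h₂

theorem polar_add_left (x y z : W) :
    QuadraticMap.polar q (x + y) z = QuadraticMap.polar q x z + QuadraticMap.polar q y z := by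
  apply h₂
  have e₁ := hq (x + y) z
  have e₂ := hq (x + z) y
  have e₃ := hq x (y - z)
  have e₄ := hq y z
  rw [show x + z + y = x + y + z by abel, show x + z - y = x - (y - z) by abel] at e₂
  rw [show x + (y - z) = x + y - z by abel] at e₃
  simp only [QuadraticMap.polar]
  linear_combination (norm := module) e₁ + e₂ - e₃ - 2 • e₄

theorem polar_zsmul_left (n : ℤ) (x y : W) :
    QuadraticMap.polar q (n • x) y = n • QuadraticMap.polar q x y :=
  map_zsmul (AddMonoidHom.mk' (QuadraticMap.polar q · y)
    fun x x' => hq.polar_add_left h₂ x x' y) n x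

theorem polar_self (x : W) : QuadraticMap.polar q x x = 2 • q x := by
  have hq0 : q 0 = 0 := by
    apply h₂
    have h := hq 0 0
    rw [add_zero, sub_zero] at h
    linear_combination (norm := module) -h
  have h := hq x x
  rw [sub_self, hq0] at h
  rw [QuadraticMap.polar]
  linear_combination (norm := module) h

theorem map_zsmul (n : ℤ) (x : W) : q (n • x) = (n * n) • q x := by
  apply h₂
  calc 2 • q (n • x) = QuadraticMap.polar q (n • x) (n • x) := (hq.polar_self h₂ _).symm
    _ = n • n • QuadraticMap.polar q x x := by
      rw [hq.polar_zsmul_left h₂, QuadraticMap.polar_comm, hq.polar_zsmul_left h₂]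
    _ = 2 • (n * n) • q x := by
      rw [hq.polar_self h₂, mul_smul, smul_comm n 2, smul_comm n 2]

end ParallelogramLaw

/-- A map into a group without `2`-torsion that satisfies the parallelogram law, bundled as a
quadratic map over `ℤ`. -/
def ParallelogramLaw.quadraticMap {q : W → G} (hq : ParallelogramLaw q)
    (h₂ : IsSMulRegular G 2) : QuadraticMap ℤ W G :=
  .ofPolar q (hq.map_zsmul h₂) (hq.polar_add_left h₂) (hq.polar_zsmul_left h₂)

/-- The functional equation linking the restrictions `f` and `g` of an orthogonally additive map to
two orthogonal copies of `W`: it compares two orthogonal decompositions of `(x - y, x + y)`, namely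
into its components and as `(x, x) + (-y, y)`. -/
def ParallelogramPair (f g : W → G) : Prop :=
  ∀ x y, f (x - y) + g (x + y) = f x + g x + (f (-y) + g y)

namespace ParallelogramPair

variable {f g : W → G} (hfg : ParallelogramPair f g)
include hfg

theorem odd_part_add (h₂ : IsSMulRegular G 2) (x y : W) :
    f (x + y) - f (-(x + y)) = f x - f (-x) + (f y - f (-y)) := by
  apply h₂
  have e₁ := hfg x (-y)
  have e₂ := hfg (-x) y
  have e₃ := hfg (-y) x
  have e₄ := hfg y (-x)
  simp only [sub_neg_eq_add, neg_neg, ← sub_eq_add_neg, ← neg_add'] at e₁ e₂ e₃ e₄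
  rw [neg_add_eq_sub] at e₂ e₃
  rw [add_comm y x] at e₃ e₄
  linear_combination (norm := module) e₁ - e₂ - e₃ + e₄

theorem even_part_eq (hW : ∀ x : W, Even x) (hf : f 0 = 0) (x : W) :
    g x + g (-x) = f x + f (-x) := by
  obtain ⟨z, rfl⟩ := hW x
  have e₀ := hfg 0 0
  have e₁ := hfg z z
  have e₂ := hfg (-z) (-z)
  have e₃ := hfg z (-z)
  have e₄ := hfg (-z) z
  simp only [sub_neg_eq_add, neg_neg, sub_self, neg_add_cancel, add_neg_cancel, neg_zero, add_zero,
    ← neg_add', ← neg_add, hf] at e₀ e₁ e₂ e₃ e₄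
  linear_combination (norm := module) e₁ + e₂ - e₃ - e₄ - 2 • e₀

theorem even_part_parallelogram (hW : ∀ x : W, Even x) (hf : f 0 = 0) :
    ParallelogramLaw fun x => f x + f (-x) := by
  intro x y
  have e₁ := hfg x y
  have e₂ := hfg (-x) (-y)
  rw [neg_neg, ← neg_add, ← neg_sub'] at e₂
  have hg := hfg.even_part_eq hW hf
  linear_combination (norm := module) e₁ + e₂ - hg (x + y) + hg x + hg y

theorem exists_additive_add_quadratic [Invertible (2 : Module.End ℤ G)]
    (hW : ∀ x : W, Even x) (hf : f 0 = 0) :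
    ∃ (T : W →+ G) (Q : QuadraticMap ℤ W G), ∀ x, f x = T x + Q x := by
  have h₂ : IsSMulRegular G 2 := isSMulRegular_two_of_invertible
  let half : G →+ G := (⅟(2 : Module.End ℤ G)).toAddMonoidHom
  have hhalf (a : G) : 2 • half a = a := smul_invOf_smul (2 : Module.End ℤ G) a
  refine ⟨AddMonoidHom.mk' (fun x => half (f x - f (-x))) fun x y => ?_,
    ParallelogramLaw.quadraticMap (q := fun x => half (f x + f (-x))) (fun x y => ?_) h₂,
    fun x => ?_⟩
  · rw [← map_add, hfg.odd_part_add h₂]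
  · simpa only [map_add, map_nsmul] using congrArg half (hfg.even_part_parallelogram hW hf x y)
  · apply h₂
    change 2 • f x = 2 • (half (f x - f (-x)) + half (f x + f (-x)))
    rw [← map_add, hhalf]
    abel

end ParallelogramPair

end UniquelyDivisible

section RangeOrthogonal

open ContinuousLinearMap

variable {𝕜 H₁ H₂ H₃ G : Type*} [RCLike 𝕜]
  [NormedAddCommGroup H₁] [InnerProductSpace 𝕜 H₁] [CompleteSpace H₁]
  [NormedAddCommGroup H₂] [InnerProductSpace 𝕜 H₂] [CompleteSpace H₂]
  [NormedAddCommGroup H₃] [InnerProductSpace 𝕜 H₃] [CompleteSpace H₃]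
  [AddCommGroup G]

theorem adjoint_comp_eq_zero_comm {x y : H₁ →L[𝕜] H₂} (h : adjoint x ∘L y = 0) :
    adjoint y ∘L x = 0 := by
  simpa only [adjoint_comp, adjoint_adjoint, map_zero] using congrArg (adjoint ·) h

theorem adjoint_comp_comp_eq_zero {P Q : H₃ →L[𝕜] H₂} (h : adjoint P ∘L Q = 0)
    (x y : H₁ →L[𝕜] H₃) : adjoint (P ∘L x) ∘L (Q ∘L y) = 0 := by
  rw [adjoint_comp, comp_assoc, ← comp_assoc _ Q, h, zero_comp, comp_zero]

/-- Maps `f` on operators that are additive on pairs with orthogonal ranges; range orthogonality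
`x ⊥ y` is encoded as `x* y = 0`. -/
def IsOrthogonallyAdditive (f : (H₁ →L[𝕜] H₂) → G) : Prop :=
  ∀ x y : H₁ →L[𝕜] H₂, adjoint x ∘L y = 0 → f (x + y) = f x + f y

namespace IsOrthogonallyAdditive

variable {f : (H₁ →L[𝕜] H₂) → G} (hf : IsOrthogonallyAdditive f)
include hf

theorem map_zero : f 0 = 0 := by
  simpa only [add_zero, left_eq_add] using hf 0 0 (comp_zero _)

theorem map_sum {κ : Type*} (s : Finset κ) {x : κ → H₁ →L[𝕜] H₂}
    (hx : Pairwise fun j k => adjoint (x j) ∘L x k = 0) :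
    f (∑ k ∈ s, x k) = ∑ k ∈ s, f (x k) := by
  classical
  induction s using Finset.induction_on with
  | empty => simpa only [Finset.sum_empty] using hf.map_zero
  | insert a s ha ih =>
    rw [Finset.sum_insert ha, Finset.sum_insert ha, hf, ih]
    rw [comp_finsetSum]
    exact Finset.sum_eq_zero fun k hk => hx (ne_of_mem_of_not_mem hk ha).symm

theorem parallelogramPair {P Q : H₃ →L[𝕜] H₂} (hPQ : adjoint P ∘L Q = 0)
    (hQQ : adjoint Q ∘L Q = adjoint P ∘L P) :
    ParallelogramPair (fun x : H₁ →L[𝕜] H₃ => f (P ∘L x)) (fun x => f (Q ∘L x)) := by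
  intro x y
  have hadd (u v : H₁ →L[𝕜] H₃) : f (P ∘L u + Q ∘L v) = f (P ∘L u) + f (Q ∘L v) :=
    hf _ _ (adjoint_comp_comp_eq_zero hPQ u v)
  have horth : adjoint (P + Q) ∘L (Q - P) = 0 := by
    rw [map_add, add_comp, comp_sub, comp_sub, hPQ, hQQ, adjoint_comp_eq_zero_comm hPQ]
    abel
  have hsplit : P ∘L (x - y) + Q ∘L (x + y) = (P + Q) ∘L x + (Q - P) ∘L y := by
    simp only [comp_sub, comp_add, add_comp, sub_comp]
    abel
  have hneg : (Q - P) ∘L y = P ∘L (-y) + Q ∘L y := by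
    rw [sub_comp, comp_neg, neg_add_eq_sub]
  rw [← hadd, hsplit, hf _ _ (adjoint_comp_comp_eq_zero horth x y), hneg, add_comp, hadd, hadd]

theorem exists_additive_add_quadratic_comp [Invertible (2 : Module.End ℤ G)]
    {P Q : H₃ →L[𝕜] H₂} (hPQ : adjoint P ∘L Q = 0)
    (hQQ : adjoint Q ∘L Q = adjoint P ∘L P) :
    ∃ (T : (H₁ →L[𝕜] H₃) →+ G) (q : QuadraticMap ℤ (H₁ →L[𝕜] H₃) G),
      ∀ x, f (P ∘L x) = T x + q x :=
  (hf.parallelogramPair hPQ hQQ).exists_additive_add_quadratic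
    (fun x => ⟨(2⁻¹ : 𝕜) • x, by rw [← two_smul 𝕜, smul_inv_smul₀ two_ne_zero]⟩)
    (by rw [comp_zero, hf.map_zero])

end IsOrthogonallyAdditive

end RangeOrthogonal

theorem exists_finite_coloring_displaced {ι : Type*} [Nontrivial ι] :
    ∃ (n : ℕ) (c : ι → Fin n), ∀ k, ∃ σ : Equiv.Perm ι,
      Set.MapsTo σ (c ⁻¹' {k}) (c ⁻¹' {k})ᶜ := by
  classical
  cases finite_or_infinite ι with
  | inl _ =>
    obtain ⟨n, ⟨e⟩⟩ := Finite.exists_equiv_fin ι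
    refine ⟨n, e, fun k => ?_⟩
    obtain ⟨j, hj⟩ := exists_ne (e.symm k)
    refine ⟨Equiv.swap (e.symm k) j, ?_⟩
    rintro i rfl
    simpa using hj
  | inr _ =>
    obtain ⟨e⟩ : Nonempty (ι ≃ ι ⊕ ι) := by
      rw [← Cardinal.eq, ← Cardinal.add_def, Cardinal.add_mk_eq_self]
    refine ⟨2, fun i => finTwoEquiv.symm (e i).isLeft, fun k =>
      ⟨(e.trans (Equiv.sumComm ι ι)).trans e.symm, ?_⟩⟩
    rintro i rfl
    cases h : e i <;> simp [h]

section HilbertBasis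

open ContinuousLinearMap

variable {𝕜 H E ι : Type*} [RCLike 𝕜]
  [NormedAddCommGroup H] [InnerProductSpace 𝕜 H] [NormedAddCommGroup E]

theorem ext_hilbertBasis [NormedSpace 𝕜 E] (b : HilbertBasis ι 𝕜 H) {S T : H →L[𝕜] E}
    (h : ∀ i, S (b i) = T (b i)) : S = T :=
  ext_on (Submodule.dense_iff_topologicalClosure_eq_top.2 b.dense_span)
    (Set.forall_mem_range.2 h)

theorem exists_linearIsometry_apply_hilbertBasis [InnerProductSpace 𝕜 E] [CompleteSpace E]
    (b : HilbertBasis ι 𝕜 H) {v : ι → E} (hv : Orthonormal 𝕜 v) :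
    ∃ U : H →ₗᵢ[𝕜] E, ∀ i, U (b i) = v i := by
  classical
  exact ⟨hv.orthogonalFamily.linearIsometry.comp b.repr.toLinearIsometry, fun i => by
    simp [HilbertBasis.repr_self]⟩

theorem nontrivial_of_two_le_rank (b : HilbertBasis ι 𝕜 H) (hdim : 2 ≤ Module.rank 𝕜 H) :
    Nontrivial ι := by
  by_contra hι
  rw [not_nontrivial_iff_subsingleton] at hι
  have := Fintype.ofFinite ι
  rw [rank_eq_card_basis b.toOrthonormalBasis.toBasis] at hdim
  exact (Fintype.card_le_one_iff_subsingleton.2 hι).not_gt (by exact_mod_cast hdim)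

variable [CompleteSpace H]

/-- The orthogonal projection onto the closed span of the basis vectors with index in `s`. -/
noncomputable def basisProjection (b : HilbertBasis ι 𝕜 H) (s : Set ι) : H →L[𝕜] H :=
  (Submodule.span 𝕜 (b '' s)).topologicalClosure.starProjection

variable (b : HilbertBasis ι 𝕜 H) {s t : Set ι} {i : ι}

theorem basisProjection_apply_of_mem (hi : i ∈ s) : basisProjection b s (b i) = b i :=
  Submodule.starProjection_eq_self_iff.2
    (Submodule.le_topologicalClosure _ (Submodule.subset_span ⟨i, hi, rfl⟩))

theorem basisProjection_apply_of_notMem (hi : i ∉ s) : basisProjection b s (b i) = 0 := by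
  rw [basisProjection, Submodule.starProjection_apply_eq_zero_iff, Submodule.orthogonal_closure]
  have hortho : Submodule.span 𝕜 (b '' s) ⟂ Submodule.span 𝕜 {b i} := by
    rw [Submodule.isOrtho_span]
    rintro _ ⟨j, hj, rfl⟩ _ rfl
    exact b.orthonormal.2 (ne_of_mem_of_not_mem hj hi)
  exact hortho.symm (Submodule.mem_span_singleton_self _)

theorem adjoint_basisProjection (s : Set ι) :
    adjoint (basisProjection b s) = basisProjection b s :=
  (isSelfAdjoint_starProjection _).adjoint_eq

theorem basisProjection_comp_of_disjoint (hst : Disjoint s t) :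
    basisProjection b s ∘L basisProjection b t = 0 := by
  refine ext_hilbertBasis b fun i => ?_
  by_cases hi : i ∈ t
  · rw [comp_apply, basisProjection_apply_of_mem b hi,
      basisProjection_apply_of_notMem b (hst.notMem_of_mem_right hi), zero_apply]
  · rw [comp_apply, basisProjection_apply_of_notMem b hi, map_zero, zero_apply]

theorem sum_basisProjection_fiber {κ : Type*} [Fintype κ] (c : ι → κ) :
    ∑ k, basisProjection b (c ⁻¹' {k}) = 1 := by
  refine ext_hilbertBasis b fun i => ?_
  rw [_root_.sum_apply, Finset.sum_eq_single (c i)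
    (fun k _ hk => basisProjection_apply_of_notMem b hk.symm) (by simp)]
  exact basisProjection_apply_of_mem b rfl

theorem exists_orthogonal_copy_basisProjection {σ : ι → ι} (hσ : σ.Injective)
    (hs : Set.MapsTo σ s sᶜ) :
    ∃ Q : H →L[𝕜] H, adjoint (basisProjection b s) ∘L Q = 0 ∧
      adjoint Q ∘L Q = adjoint (basisProjection b s) ∘L basisProjection b s := by
  obtain ⟨U, hU⟩ := exists_linearIsometry_apply_hilbertBasis b (b.orthonormal.comp σ hσ)
  refine ⟨U.toContinuousLinearMap ∘L basisProjection b s, ?_, ?_⟩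
  · rw [adjoint_basisProjection]
    refine ext_hilbertBasis b fun i => ?_
    by_cases hi : i ∈ s
    · simp [basisProjection_apply_of_mem b hi, hU, basisProjection_apply_of_notMem b (hs hi)]
    · simp [basisProjection_apply_of_notMem b hi]
  · rw [adjoint_comp, comp_assoc, ← comp_assoc _ _ (basisProjection b s),
      (norm_map_iff_adjoint_comp_self _).1 U.norm_map]
    rfl

theorem exists_sum_eq_one_with_orthogonal_copies (hdim : 2 ≤ Module.rank 𝕜 H) :
    ∃ (n : ℕ) (P Q : Fin n → H →L[𝕜] H), ∑ k, P k = 1 ∧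
      (Pairwise fun j k => adjoint (P j) ∘L P k = 0) ∧
      ∀ k, adjoint (P k) ∘L Q k = 0 ∧ adjoint (Q k) ∘L Q k = adjoint (P k) ∘L P k := by
  obtain ⟨w, b, -⟩ := exists_hilbertBasis 𝕜 H
  have := nontrivial_of_two_le_rank b hdim
  obtain ⟨n, c, hc⟩ := exists_finite_coloring_displaced (ι := w)
  choose σ hσ using hc
  choose Q hQ using fun k => exists_orthogonal_copy_basisProjection b (σ k).injective (hσ k)
  refine ⟨n, fun k => basisProjection b (c ⁻¹' {k}), Q, sum_basisProjection_fiber b c,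
    fun j k hjk => ?_, hQ⟩
  simpa only [adjoint_basisProjection] using
    basisProjection_comp_of_disjoint b ((Set.disjoint_singleton.2 hjk).preimage c)

end HilbertBasis

section Representation

open ContinuousLinearMap

variable {𝕜 H₁ H₂ G : Type*} [RCLike 𝕜]
  [NormedAddCommGroup H₁] [InnerProductSpace 𝕜 H₁] [CompleteSpace H₁]
  [NormedAddCommGroup H₂] [InnerProductSpace 𝕜 H₂] [CompleteSpace H₂]
  [AddCommGroup G]

theorem IsOrthogonallyAdditive.exists_additive_add_quadratic [Invertible (2 : Module.End ℤ G)]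
    (hdim : 2 ≤ Module.rank 𝕜 H₂) {f : (H₁ →L[𝕜] H₂) → G} (hf : IsOrthogonallyAdditive f) :
    ∃ (T : (H₁ →L[𝕜] H₂) →+ G) (q : QuadraticMap ℤ (H₁ →L[𝕜] H₂) G), ∀ x, f x = T x + q x := by
  obtain ⟨n, P, Q, hsum, hP, hQ⟩ := exists_sum_eq_one_with_orthogonal_copies hdim
  choose T q hTq using fun k =>
    hf.exists_additive_add_quadratic_comp (H₃ := H₂) (hQ k).1 (hQ k).2
  refine ⟨∑ k, T k, ∑ k, q k, fun x => ?_⟩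
  calc f x = f (∑ k, P k ∘L x) := by rw [← finsetSum_comp, hsum, one_def, id_comp]
    _ = ∑ k, f (P k ∘L x) :=
      hf.map_sum _ fun j k hjk => adjoint_comp_comp_eq_zero (hP hjk) x x
    _ = (∑ k, T k) x + (∑ k, q k) x := by
      simp only [hTq, Finset.sum_add_distrib, AddMonoidHom.finsetSum_apply, _root_.sum_apply]

theorem orthogonally_additive_representation_boundedOperators_general
    (hdim₂ : 2 ≤ Module.rank 𝕜 H₂)
    (hG2 : ∀ g : G, ∃! h : G, h + h = g)
    (f : (H₁ →L[𝕜] H₂) → G)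
    (hf : ∀ x y : H₁ →L[𝕜] H₂, adjoint x ∘L y = 0 → f (x + y) = f x + f y) :
    ∃ (T : (H₁ →L[𝕜] H₂) → G) (B : (H₁ →L[𝕜] H₂) → (H₁ →L[𝕜] H₂) → G),
      ((∀ x y, T (x + y) = T x + T y) ∧
       (∀ x y, B x y = B y x) ∧
       (∀ x y z, B (x + y) z = B x z + B y z) ∧
       (∀ x y z, B x (y + z) = B x y + B x z) ∧
       (∀ x y, adjoint x ∘L y = 0 → B x y = 0) ∧
       (∀ x, f x = T x + B x x)) ∧
      (∀ (T' : (H₁ →L[𝕜] H₂) → G) (B' : (H₁ →L[𝕜] H₂) → (H₁ →L[𝕜] H₂) → G),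
        ((∀ x y, T' (x + y) = T' x + T' y) ∧
         (∀ x y, B' x y = B' y x) ∧
         (∀ x y z, B' (x + y) z = B' x z + B' y z) ∧
         (∀ x y z, B' x (y + z) = B' x y + B' x z) ∧
         (∀ x y, adjoint x ∘L y = 0 → B' x y = 0) ∧
         (∀ x, f x = T' x + B' x x)) → T' = T) := by
  obtain ⟨_⟩ := (isUnit_two_moduleEnd hG2).nonempty_invertible
  obtain ⟨T, q, hTq⟩ := IsOrthogonallyAdditive.exists_additive_add_quadratic hdim₂ hf
  refine ⟨T, fun x y => q.associated x y, ⟨map_add T, q.associated_isSymm ℤ,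
    LinearMap.map_add₂ q.associated, fun x => map_add (q.associated x), fun x y hxy => ?_,
    fun x => ?_⟩, ?_⟩
  · have hq : q (x + y) = q x + q y := by
      have h := hf x y hxy
      rw [hTq, hTq, hTq, map_add] at h
      linear_combination (norm := module) h
    simp only [QuadraticMap.associated_apply, hq, add_sub_cancel_left, sub_self, smul_zero]
  · simp only [QuadraticMap.associated_eq_self_apply, hTq]
  · rintro T' B' ⟨hT', -, hB'l, hB'r, -, hf'⟩
    have hB' : Function.Even fun x => B' x x := fun x => neg_neg_of_biadditive hB'l hB'r x x
    have hTT' := eq_of_additive_add_even_eq isSMulRegular_two_of_invertible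
      (T := AddMonoidHom.mk' T' hT') hB' q.map_neg fun x => (hf' x).symm.trans (hTq x)
    exact congrArg DFunLike.coe hTT'

end Representation

open ContinuousLinearMap in
/-- Proposition 6.1, first part.
Let `H₁, H₂` be complex Hilbert spaces of dimension at least 2, with the orthogonality
`x ⊥ y ⟺ x* ⬝ y = 0` on `B(H₁,H₂)`.  If `G` is a uniquely 2-divisible abelian group and
`f : B(H₁,H₂) → G` is orthogonally additive, then there are a unique additive
`T : B(H₁,H₂) → G` and a symmetric biadditive orthogonality preserving `B` with
`f(x) = T(x) + B(x,x)` for all `x`. -/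
theorem orthogonally_additive_representation_boundedOperators
    {H₁ H₂ : Type*}
    [NormedAddCommGroup H₁] [InnerProductSpace ℂ H₁] [CompleteSpace H₁]
    [NormedAddCommGroup H₂] [InnerProductSpace ℂ H₂] [CompleteSpace H₂]
    (hdim₁ : 2 ≤ Module.rank ℂ H₁) (hdim₂ : 2 ≤ Module.rank ℂ H₂)
    {G : Type*} [AddCommGroup G]
    (hG2 : ∀ g : G, ∃! h : G, h + h = g)
    (f : (H₁ →L[ℂ] H₂) → G)
    (hf : ∀ x y : H₁ →L[ℂ] H₂, adjoint x ∘L y = 0 → f (x + y) = f x + f y) :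
    ∃ (T : (H₁ →L[ℂ] H₂) → G) (B : (H₁ →L[ℂ] H₂) → (H₁ →L[ℂ] H₂) → G),
      ((∀ x y, T (x + y) = T x + T y) ∧
       (∀ x y, B x y = B y x) ∧
       (∀ x y z, B (x + y) z = B x z + B y z) ∧
       (∀ x y z, B x (y + z) = B x y + B x z) ∧
       (∀ x y, adjoint x ∘L y = 0 → B x y = 0) ∧
       (∀ x, f x = T x + B x x)) ∧
      (∀ (T' : (H₁ →L[ℂ] H₂) → G) (B' : (H₁ →L[ℂ] H₂) → (H₁ →L[ℂ] H₂) → G),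
        ((∀ x y, T' (x + y) = T' x + T' y) ∧
         (∀ x y, B' x y = B' y x) ∧
         (∀ x y z, B' (x + y) z = B' x z + B' y z) ∧
         (∀ x y z, B' x (y + z) = B' x y + B' x z) ∧
         (∀ x y, adjoint x ∘L y = 0 → B' x y = 0) ∧
         (∀ x, f x = T' x + B' x x)) → T' = T) :=
  orthogonally_additive_representation_boundedOperators_general hdim₂ hG2 f hf
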